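/- For every T ⊆ 𝔹 and every β ∈ 𝔹 − T: L_{T,β}(g_β) > 0, and L_{T,β}(g_τ) = 0 for every τ ∈ 𝔹 with τ ≠ β. -/

import Mathlib

/- Setting: `B` is the finite nonempty set 𝔹 equipped with a permutation `σ` (Frobenius),
and `p` is a prime.  Weights live in `ℚ^𝔹 = (B → ℚ)`.  The orbits `𝔹_𝔭` of `σ` are the sets
`orbit σ β`, and for `T ⊆ 𝔹` we have `T_𝔭 = T ∩ orbit σ β`. -/

open scoped Classical

noncomputable section

namespace GO

variable {B : Type*} [Fintype B] [DecidableEq B]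

/-- The standard basis vector `e_β` of `ℚ^𝔹`. -/
def e (β : B) : B → ℚ := fun τ => if τ = β then 1 else 0

/-- `β'` lies in the `σ`-orbit of `β`. -/
def sameOrbit (σ : Equiv.Perm B) (β β' : B) : Prop := ∃ n : ℕ, (σ ^ n) β = β'

/-- The `σ`-orbit `𝔹_𝔭` of `β`. -/
def orbit (σ : Equiv.Perm B) (β : B) : Set B := {τ | sameOrbit σ β τ}

/-- `|𝔹_𝔭|`, the cardinality of the orbit of `β`. -/
def orbitCard (σ : Equiv.Perm B) (β : B) : ℕ := (orbit σ β).ncard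

/-- For `β`, `β'` in the same orbit: the unique `n` with `0 < n ≤ |𝔹_𝔭|` and `σ^n β' = β`,
realized as the least positive `n` with `σ^n β' = β`. -/
def steps (σ : Equiv.Perm B) (β' β : B) : ℕ := sInf {n : ℕ | 0 < n ∧ (σ ^ n) β' = β}

/-- For `β`, `β'` in the same orbit: the unique `n` with `0 ≤ n < |𝔹_𝔭|` and `σ^n β = β'`. -/
def steps0 (σ : Equiv.Perm B) (β β' : B) : ℕ := sInf {n : ℕ | (σ ^ n) β = β'}

/-- `h_β^{β'} = -e_β + p^n e_{β'}` where `β = σ^n β'` with `0 < n ≤ |𝔹_𝔭|`. -/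
def hvec (σ : Equiv.Perm B) (p : ℕ) (β β' : B) : B → ℚ :=
  -(e β) + ((p : ℚ) ^ steps σ β' β) • e β'

/-- `b_β^{β'} = e_β + p^n e_{β'}` where `β = σ^n β'` with `0 < n ≤ |𝔹_𝔭|`. -/
def bvec (σ : Equiv.Perm B) (p : ℕ) (β β' : B) : B → ℚ :=
  (e β) + ((p : ℚ) ^ steps σ β' β) • e β'

/-- `h_β = -e_β + p e_{σ⁻¹ β}`. -/
def hsimple (σ : Equiv.Perm B) (p : ℕ) (β : B) : B → ℚ := -(e β) + (p : ℚ) • e (σ⁻¹ β)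

/-- `b_β = e_β + p e_{σ⁻¹ β}`. -/
def bsimple (σ : Equiv.Perm B) (p : ℕ) (β : B) : B → ℚ := (e β) + (p : ℚ) • e (σ⁻¹ β)

/-- The `ℚ^{≥0}`-cone generated by a set `S` of vectors: all finite nonnegative rational
linear combinations of elements of `S`. -/
def cone {V : Type*} [AddCommMonoid V] [Module ℚ V] (S : Set V) : Set V :=
  {x | ∃ (n : ℕ) (c : Fin n → ℚ) (v : Fin n → V),
    (∀ i, 0 ≤ c i) ∧ (∀ i, v i ∈ S) ∧ x = ∑ i, c i • v i}

/-- A chain in `T` (automatically contained in a single orbit, so this is the notion of a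
chain in `T_𝔭` for `T_𝔭 ⊊ 𝔹_𝔭`): `C = {σ^{-i}β : 0 ≤ i ≤ m} ⊆ T` with `σβ ∉ T` and
`σ^{-m-1}β ∉ T`. -/
def IsChainIn (σ : Equiv.Perm B) (T : Set B) (C : Set B) : Prop :=
  ∃ (β : B) (m : ℕ), σ β ∉ T ∧ (σ⁻¹ ^ (m + 1)) β ∉ T ∧
    (∀ i ≤ m, (σ⁻¹ ^ i) β ∈ T) ∧ C = {τ | ∃ i ≤ m, τ = (σ⁻¹ ^ i) β}

/-- `C̃` for a chain `C`: equals `C` if `m` is odd (i.e. `|C| = m+1` is even), and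
`C ∪ {σ^{-m-1}β} = C ∪ σ⁻¹(C)` if `m` is even (i.e. `|C|` odd). -/
def chainExt (σ : Equiv.Perm B) (C : Set B) : Set B :=
  if Odd C.ncard then C ∪ (⇑σ⁻¹ '' C) else C

/-- `T̃ = ⋃_𝔭 T̃_𝔭`: the union of `T` with the extensions `C̃` of all chains `C` in `T`.
(For orbits with `T_𝔭 = 𝔹_𝔭` there are no chains and `T̃_𝔭 = 𝔹_𝔭 = T_𝔭`.) -/
def tilde (σ : Equiv.Perm B) (T : Set B) : Set B :=
  T ∪ ⋃ (C : Set B) (_ : IsChainIn σ T C), chainExt σ C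

/-- `μ_β`: the least `i > 0` with `σ^i β ∉ T` if `T_𝔭 ≠ 𝔹_𝔭`, and `0` if `T_𝔭 = 𝔹_𝔭`. -/
def mu (σ : Equiv.Perm B) (T : Set B) (β : B) : ℕ :=
  if orbit σ β ⊆ T then 0 else sInf {i : ℕ | 0 < i ∧ (σ ^ i) β ∉ T}

/-- `n_β`: the least `i > 0` with `σ^i β ∉ T̃` (meaningful when `T̃_𝔭 ≠ 𝔹_𝔭`). -/
def nn (σ : Equiv.Perm B) (T : Set B) (β : B) : ℕ :=
  sInf {i : ℕ | 0 < i ∧ (σ ^ i) β ∉ tilde σ T}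

/-- `ν_β`: the least `i ≥ 0` with `σ^{-i} β ∉ T` (meaningful when `T_𝔭 ≠ 𝔹_𝔭`). -/
def nu (σ : Equiv.Perm B) (T : Set B) (β : B) : ℕ :=
  sInf {i : ℕ | (σ⁻¹ ^ i) β ∉ T}

/-- `𝒯(T_𝔭) = (𝔹_𝔭 − T̃_𝔭) ∪ σ(T̃_𝔭 − T_𝔭)`, taken globally (union over all `𝔭`). -/
def Tscr (σ : Equiv.Perm B) (T : Set B) : Set B :=
  (tilde σ T)ᶜ ∪ (⇑σ '' (tilde σ T \ T))

/-- The generating set `⋃_𝔭 𝒢(T_𝔭)`: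
`{h_β^{β'} : β ∈ ℋ(T_𝔭), β' ∈ 𝒯(T_𝔭)} ∪ {±b_β : β ∈ T_𝔭}` over all `𝔭`. -/
def Dgen (σ : Equiv.Perm B) (p : ℕ) (T : Set B) : Set (B → ℚ) :=
  {v | ∃ β β', β ∉ T ∧ β' ∈ Tscr σ T ∧ sameOrbit σ β β' ∧ v = hvec σ p β β'}
  ∪ {v | ∃ β ∈ T, v = bsimple σ p β ∨ v = -(bsimple σ p β)}

/-- The cone `𝒟_T`. -/
def D (σ : Equiv.Perm B) (p : ℕ) (T : Set B) : Set (B → ℚ) := cone (Dgen σ p T)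

/-- `h_{σ^{n_β}β}^{β} = -e_{σ^{n_β}β} + p^{n_β} e_β`. -/
def fH (σ : Equiv.Perm B) (p : ℕ) (T : Set B) (β : B) : B → ℚ :=
  -(e ((σ ^ nn σ T β) β)) + ((p : ℚ) ^ nn σ T β) • e β

/-- `b_{σ^{n_β}β}^{β} = e_{σ^{n_β}β} + p^{n_β} e_β`. -/
def fB (σ : Equiv.Perm B) (p : ℕ) (T : Set B) (β : B) : B → ℚ :=
  (e ((σ ^ nn σ T β) β)) + ((p : ℚ) ^ nn σ T β) • e β

/-- The generating set `⋃_𝔭 𝒢′(T_𝔭)`: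
if `𝔹_𝔭 − T̃_𝔭 ≠ ∅` it is `{h_{σ^{n_β}β}^β : β ∈ 𝔹_𝔭 − T̃_𝔭} ∪ {−b_{σ^{n_β}β}^β : β ∈ T̃_𝔭 − T_𝔭}
∪ {±b_β : β ∈ T_𝔭}`, and if `𝔹_𝔭 = T̃_𝔭` it is `{−e_β : β ∈ 𝔹_𝔭 − T_𝔭} ∪ {±b_β : β ∈ T_𝔭}`. -/
def D'gen (σ : Equiv.Perm B) (p : ℕ) (T : Set B) : Set (B → ℚ) :=
  {v | ∃ β, β ∉ tilde σ T ∧ v = fH σ p T β}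
  ∪ {v | ∃ β, β ∈ tilde σ T ∧ β ∉ T ∧ ¬ orbit σ β ⊆ tilde σ T ∧ v = -(fB σ p T β)}
  ∪ {v | ∃ β, β ∉ T ∧ orbit σ β ⊆ tilde σ T ∧ v = -(e β)}
  ∪ {v | ∃ β ∈ T, v = bsimple σ p β ∨ v = -(bsimple σ p β)}

/-- The cone `𝒟′_T`. -/
def D' (σ : Equiv.Perm B) (p : ℕ) (T : Set B) : Set (B → ℚ) := cone (D'gen σ p T)

/-- `f_β(T)` for `β ∉ T`: `h_{σ^{n_β}β}^β` if `β ∈ 𝔹_𝔭 − T̃_𝔭`; `−b_{σ^{n_β}β}^β` if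
`β ∈ T̃_𝔭 − T_𝔭` and `𝔹_𝔭 ≠ T̃_𝔭`; and `−(1+p^{|𝔹_𝔭|}) e_β` if `𝔹_𝔭 = T̃_𝔭`. -/
def fvec (σ : Equiv.Perm B) (p : ℕ) (T : Set B) (β : B) : B → ℚ :=
  if orbit σ β ⊆ tilde σ T then -((1 + (p : ℚ) ^ orbitCard σ β) • e β)
  else if β ∈ tilde σ T then -(fB σ p T β) else fH σ p T β

/-- `𝔹(T) = ⋃_𝔭 𝔹_𝔭(T)`: `β ∈ 𝔹(T)` iff `β ∉ T`, the set `𝔹_𝔭 − T̃_𝔭` is nonempty, and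
`𝔹_𝔭 − T̃_𝔭 ≠ {β}` (this encodes all three cases of the definition of `𝔹_𝔭(T)`). -/
def BT (σ : Equiv.Perm B) (T : Set B) : Set B :=
  {β | β ∉ T ∧ (orbit σ β \ tilde σ T).Nonempty ∧ orbit σ β \ tilde σ T ≠ {β}}

/-- The sign function `ε_T : 𝔹 → {−1,0,1}`. -/
def epsT (σ : Equiv.Perm B) (T : Set B) (β : B) : ℚ :=
  if orbit σ β ⊆ T then 0
  else if β ∈ tilde σ T then (-1 : ℚ) ^ (mu σ T β - 1) else 1

/-- `L^ε[β, β'](κ) = Σ_{0 ≤ i ≤ n} ε(σ^iβ) p^i k_{σ^iβ}`, where `β' = σ^n β` with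
`0 ≤ n < |𝔹_𝔭|`. -/
def Lfun (σ : Equiv.Perm B) (p : ℕ) (ε : B → ℚ) (β β' : B) (κ : B → ℚ) : ℚ :=
  ∑ i ∈ Finset.range (steps0 σ β β' + 1), ε ((σ ^ i) β) * (p : ℚ) ^ i * κ ((σ ^ i) β)

/-- `L^ε[β] = L^ε[β, σ⁻¹β]`. -/
def Lfun1 (σ : Equiv.Perm B) (p : ℕ) (ε : B → ℚ) (β : B) (κ : B → ℚ) : ℚ :=
  Lfun σ p ε β (σ⁻¹ β) κ

/-- `L_{T,β}` for `β ∈ 𝔹 − T`: `L^{ε_T}[σ^{μ_β}β]` if `β ∈ 𝔹 − T̃`, and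
`L^{ε_T}[β, σ^{μ_β−1}β]` if `β ∈ T̃ − T`. -/
def LT (σ : Equiv.Perm B) (p : ℕ) (T : Set B) (β : B) (κ : B → ℚ) : ℚ :=
  if β ∈ tilde σ T then Lfun σ p (epsT σ T) β ((σ ^ (mu σ T β - 1)) β) κ
  else Lfun1 σ p (epsT σ T) ((σ ^ mu σ T β) β) κ

/-- `ε_{T,f_β}`: negates `ε_T` on `{β, σβ, …, σ^{μ_β−1}β}`. -/
def epsTf (σ : Equiv.Perm B) (T : Set B) (β τ : B) : ℚ :=
  if ∃ i < mu σ T β, τ = (σ ^ i) β then -(epsT σ T τ) else epsT σ T τ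

/-- `L_{T,f_β,τ}` for `β ∈ 𝔹(T)` and `τ ∈ 𝔹 − (T ∪ {σ^{n_β}β})`, with `β′ = σ^{n_β}β` and
`β̃ = σ^{μ_{β′}}β′`. -/
def LTf (σ : Equiv.Perm B) (p : ℕ) (T : Set B) (β τ : B) (κ : B → ℚ) : ℚ :=
  if τ = β then
    (if β ∈ tilde σ T then
      Lfun1 σ p (epsTf σ T β) ((σ ^ mu σ T ((σ ^ nn σ T β) β)) ((σ ^ nn σ T β) β)) κ
    else
      Lfun σ p (epsTf σ T β) β (σ⁻¹ ((σ ^ mu σ T ((σ ^ nn σ T β) β)) ((σ ^ nn σ T β) β))) κ)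
  else
    (if τ ∈ tilde σ T then LT σ p T τ κ
     else Lfun1 σ p (epsTf σ T β) ((σ ^ mu σ T τ) τ) κ)

/-- `𝒟_{T,f_β} = {κ : L_{T,f_β,τ}(κ) ≥ 0 for all τ ∈ 𝔹 − (T ∪ {σ^{n_β}β})}`. -/
def Df (σ : Equiv.Perm B) (p : ℕ) (T : Set B) (β : B) : Set (B → ℚ) :=
  {κ | ∀ τ, τ ∉ T → τ ≠ (σ ^ nn σ T β) β → 0 ≤ LTf σ p T β τ κ}

/-- `i_T : ℚ^𝔹 → ℚ^{𝔹−T}`, the linear map with `i_T(e_β) = 0` if `T_𝔭 = 𝔹_𝔭` and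
`i_T(e_β) = (−p)^{ν_β} e_{σ^{−ν_β}β}` otherwise. -/
def iT (σ : Equiv.Perm B) (p : ℕ) (T : Set B) (κ : B → ℚ) : {β : B // β ∉ T} → ℚ :=
  fun β₀ => ∑ β : B, κ β *
    (if orbit σ β ⊆ T then 0
     else if (σ⁻¹ ^ nu σ T β) β = β₀.1 then (-(p : ℚ)) ^ nu σ T β else 0)

/-- Restriction to `ℚ^{𝔹−T}` of a vector of `ℚ^𝔹` (used for vectors supported on `𝔹 − T`). -/
def res (T : Set B) (v : B → ℚ) : {β : B // β ∉ T} → ℚ := fun β => v β.1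

/-- The generating set `𝒢^{T-red}(T) = ⋃_𝔭 𝒢_𝔭^{T-red}(T)` of the reduced cone. -/
def Gred (σ : Equiv.Perm B) (p : ℕ) (T : Set B) : Set ({β : B // β ∉ T} → ℚ) :=
  {v | ∃ β, β ∉ tilde σ T ∧ v = res T (fH σ p T β)}
  ∪ {v | ∃ β, β ∈ tilde σ T ∧ β ∉ T ∧ ¬ orbit σ β ⊆ tilde σ T ∧ v = res T (-(fB σ p T β))}
  ∪ {v | ∃ β, β ∉ T ∧ orbit σ β ⊆ tilde σ T ∧ v = res T (-(e β))}

/-- The minimal cone `𝒞^min_T = i_T(𝒟_T ∩ ⋂_{β ∈ 𝔹(T)} 𝒟_{T,f_β}) ⊆ ℚ^{𝔹−T}`. -/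
def Cmin (σ : Equiv.Perm B) (p : ℕ) (T : Set B) : Set ({β : B // β ∉ T} → ℚ) :=
  iT σ p T '' (D σ p T ∩ {κ | ∀ β ∈ BT σ T, κ ∈ Df σ p T β})

/-- `g_β`: `b_β` if `β ∈ T_𝔭`; `−e_β` if `β ∈ T̃_𝔭 − T_𝔭` and `𝔹_𝔭 = T̃_𝔭`;
`−b_{σ^{n_β}β}^β` if `β ∈ T̃_𝔭 − T_𝔭` and `𝔹_𝔭 ≠ T̃_𝔭`; `h_{σ^{n_β}β}^β` if `β ∈ 𝔹_𝔭 − T̃_𝔭`. -/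
def gvec (σ : Equiv.Perm B) (p : ℕ) (T : Set B) (β : B) : B → ℚ :=
  if β ∈ T then bsimple σ p β
  else if orbit σ β ⊆ tilde σ T then -(e β)
  else if β ∈ tilde σ T then -(fB σ p T β)
  else fH σ p T β

/-- The map `σ̄ : β ↦ σ^{n_β} β`. -/
def sigbar (σ : Equiv.Perm B) (T : Set B) (β : B) : B := (σ ^ nn σ T β) β

/-- `h_β = -e_β + p e_{σ⁻¹β}` as an element of `ℤ^𝔹`. -/
def hZ (σ : Equiv.Perm B) (p : ℕ) (β : B) : B → ℤ :=
  fun τ => (if τ = β then -1 else 0) + (if τ = σ⁻¹ β then (p : ℤ) else 0)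

end GO

end

namespace GO

variable {B : Type*} [Fintype B] [DecidableEq B]

lemma ap_inv (σ : Equiv.Perm B) (x : B) : σ (σ⁻¹ x) = x := by simp

lemma inv_ap_self (σ : Equiv.Perm B) (x : B) : σ⁻¹ (σ x) = x := by simp

lemma pow_ap (σ : Equiv.Perm B) (a b : ℕ) (x : B) : (σ ^ a) ((σ ^ b) x) = (σ ^ (a + b)) x := by
  rw [pow_add]; rfl

lemma exists_pos_not_mem (σ : Equiv.Perm B) (S : Set B) (β : B) (h : ¬ orbit σ β ⊆ S) :
    {i : ℕ | 0 < i ∧ (σ ^ i) β ∉ S}.Nonempty := by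
  rw [Set.not_subset] at h
  obtain ⟨τ, ⟨n, hn⟩, hτ⟩ := h
  refine ⟨n + orderOf σ, ?_, ?_⟩
  · have := orderOf_pos σ
    omega
  · rw [pow_add, pow_orderOf_eq_one, mul_one, hn]; exact hτ

lemma sameOrbit_symm {σ : Equiv.Perm B} {a b : B} (h : sameOrbit σ a b) : sameOrbit σ b a := by
  obtain ⟨n, rfl⟩ := h
  refine ⟨n * orderOf σ - n, ?_⟩
  have h1 := orderOf_pos σ
  have h2 : n ≤ n * orderOf σ := Nat.le_mul_of_pos_right n h1
  rw [pow_ap, Nat.sub_add_cancel h2, mul_comm, pow_mul, pow_orderOf_eq_one]; simp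

lemma sameOrbit_trans {σ : Equiv.Perm B} {a b c : B} (h : sameOrbit σ a b)
    (h' : sameOrbit σ b c) : sameOrbit σ a c := by
  obtain ⟨n, rfl⟩ := h
  obtain ⟨m, rfl⟩ := h'
  exact ⟨m + n, (pow_ap σ m n a).symm⟩

lemma sameOrbit_pow (σ : Equiv.Perm B) (n : ℕ) (a : B) : sameOrbit σ a ((σ ^ n) a) := ⟨n, rfl⟩

lemma orbit_subset_of {σ : Equiv.Perm B} {a b : B} {S : Set B} (h : sameOrbit σ a b)
    (hs : orbit σ a ⊆ S) : orbit σ b ⊆ S := fun _ hτ => hs (sameOrbit_trans h hτ)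

lemma self_mem (σ : Equiv.Perm B) (a : B) : a ∈ orbit σ a := ⟨0, by simp⟩

lemma mu_spec {σ : Equiv.Perm B} {T : Set B} {β : B} (h : ¬ orbit σ β ⊆ T) :
    0 < mu σ T β ∧ (σ ^ mu σ T β) β ∉ T := by
  rw [mu, if_neg h]
  exact Nat.sInf_mem (exists_pos_not_mem σ T β h)

lemma mu_le {σ : Equiv.Perm B} {T : Set B} {β : B} {j : ℕ} (hj : 0 < j)
    (hT : (σ ^ j) β ∉ T) : mu σ T β ≤ j := by
  rw [mu]
  split_ifs
  · omega
  · exact Nat.sInf_le ⟨hj, hT⟩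

lemma mem_of_lt_mu {σ : Equiv.Perm B} {T : Set B} {β : B} {j : ℕ} (hj : 0 < j)
    (hT : j < mu σ T β) : (σ ^ j) β ∈ T := by
  by_contra h
  have := mu_le hj h
  omega

lemma mu_eq {σ : Equiv.Perm B} {T : Set B} {β : B} {j : ℕ} (hj : 0 < j)
    (hT : (σ ^ j) β ∉ T) (hl : ∀ i, 0 < i → i < j → (σ ^ i) β ∈ T) : mu σ T β = j := by
  have h : ¬ orbit σ β ⊆ T := fun h => hT (h ⟨j, rfl⟩)
  have h1 := mu_le hj hT
  have h2 := mu_spec h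
  by_contra hne
  exact h2.2 (hl _ h2.1 (by omega))

lemma nn_spec {σ : Equiv.Perm B} {T : Set B} {β : B} (h : ¬ orbit σ β ⊆ tilde σ T) :
    0 < nn σ T β ∧ (σ ^ nn σ T β) β ∉ tilde σ T :=
  Nat.sInf_mem (exists_pos_not_mem σ (tilde σ T) β h)

lemma nn_le {σ : Equiv.Perm B} {T : Set B} {β : B} {j : ℕ} (hj : 0 < j)
    (hT : (σ ^ j) β ∉ tilde σ T) : nn σ T β ≤ j := Nat.sInf_le ⟨hj, hT⟩

lemma inv_ap (σ : Equiv.Perm B) {a b : ℕ} (h : a ≤ b) (x : B) :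
    (σ ^ a) ((σ⁻¹ ^ b) x) = (σ⁻¹ ^ (b - a)) x := by
  obtain ⟨c, rfl⟩ := Nat.exists_eq_add_of_le h
  rw [Nat.add_sub_cancel_left, pow_add, Equiv.Perm.mul_apply, inv_pow, inv_pow]
  exact ap_inv _ _

lemma inv_ap' (σ : Equiv.Perm B) {a b : ℕ} (h : a ≤ b) (x : B) :
    (σ⁻¹ ^ a) ((σ ^ b) x) = (σ ^ (b - a)) x := by
  obtain ⟨c, rfl⟩ := Nat.exists_eq_add_of_le h
  rw [Nat.add_sub_cancel_left, pow_add, Equiv.Perm.mul_apply, inv_pow]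
  exact inv_ap_self _ _

lemma chain_card {σ : Equiv.Perm B} {T : Set B} {b : B} {m : ℕ}
    (h1 : (σ⁻¹ ^ (m + 1)) b ∉ T) (h2 : ∀ i ≤ m, (σ⁻¹ ^ i) b ∈ T) :
    ({τ | ∃ i ≤ m, τ = (σ⁻¹ ^ i) b} : Set B).ncard = m + 1 := by
  have key : ∀ i j, i < j → j ≤ m → (σ⁻¹ ^ i) b ≠ (σ⁻¹ ^ j) b := by
    intro i j hij hj he
    apply h1
    have : (σ⁻¹ ^ (m + 1)) b = (σ⁻¹ ^ (m + 1 - j + i)) b := by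
      rw [← pow_ap σ⁻¹ _ i, he, pow_ap]; congr 2; omega
    rw [this]
    exact h2 _ (by omega)
  have hs : ({τ | ∃ i ≤ m, τ = (σ⁻¹ ^ i) b} : Set B)
      = (((Finset.range (m + 1)).image (fun i => (σ⁻¹ ^ i) b) : Finset B) : Set B) := by
    ext τ
    simp only [Set.mem_ofPred_eq, Finset.coe_image, Set.mem_image, Finset.coe_range, Set.mem_Iio]
    constructor
    · rintro ⟨i, hi, rfl⟩; exact ⟨i, by omega, rfl⟩
    · rintro ⟨i, hi, rfl⟩; exact ⟨i, by omega, rfl⟩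
  rw [hs, Set.ncard_coe_finset, Finset.card_image_of_injOn, Finset.card_range]
  intro i hi j hj he
  simp only [Finset.coe_range, Set.mem_Iio] at hi hj
  rcases lt_trichotomy i j with h | h | h
  · exact absurd he (key i j h (by omega))
  · exact h
  · exact absurd he.symm (key j i h (by omega))

lemma mem_tilde_iff {σ : Equiv.Perm B} {T : Set B} {β : B} (hβ : β ∉ T) :
    β ∈ tilde σ T ↔ Even (mu σ T β) := by
  have hO : ¬ orbit σ β ⊆ T := fun h => hβ (h (self_mem σ β))
  constructor
  · rintro (h | h)
    · exact absurd h hβ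
    · simp only [Set.mem_iUnion] at h
      obtain ⟨C, ⟨b, m, h1, h2, h3, rfl⟩, hC⟩ := h
      rw [chainExt, chain_card h2 h3] at hC
      have hnC : β ∉ ({τ | ∃ i ≤ m, τ = (σ⁻¹ ^ i) b} : Set B) := by
        rintro ⟨i, hi, rfl⟩; exact hβ (h3 i hi)
      split_ifs at hC with hodd
      · rcases hC with hC | ⟨c, ⟨i, hi, rfl⟩, hc⟩
        · exact absurd hC hnC
        · have hc' : β = (σ⁻¹ ^ (i + 1)) b := by rw [← hc, pow_succ']; rfl
          have him : i = m := by
            by_contra hne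
            exact hβ (hc' ▸ h3 (i + 1) (by omega))
          subst him
          have : mu σ T β = i + 2 := by
            apply mu_eq (by omega)
            · rw [hc', pow_succ', Equiv.Perm.mul_apply, inv_ap σ le_rfl]; simpa using h1
            · intro j hj hj'
              rw [hc', inv_ap σ (by omega)]
              exact h3 _ (by omega)
          rw [this]
          have := hodd.add_one
          exact this
      · exact absurd hC hnC
  · intro he
    have hm := mu_spec hO
    obtain ⟨m, hm2⟩ : ∃ m, mu σ T β = m + 2 := by
      obtain ⟨k, hk⟩ := he
      exact ⟨mu σ T β - 2, by omega⟩
    have h2 : (σ⁻¹ ^ (m + 1)) ((σ ^ (m + 1)) β) = β := by rw [inv_ap' σ le_rfl]; simp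
    have h3 : ∀ i ≤ m, (σ⁻¹ ^ i) ((σ ^ (m + 1)) β) ∈ T := by
      intro i hi
      rw [inv_ap' σ (by omega)]
      exact mem_of_lt_mu (by omega) (by omega)
    right
    simp only [Set.mem_iUnion]
    refine ⟨_, ⟨(σ ^ (m + 1)) β, m, ?_, ?_, h3, rfl⟩, ?_⟩
    · have := hm.2
      rw [hm2, pow_succ'] at this
      exact this
    · rw [h2]; exact hβ
    · rw [chainExt, chain_card (by rw [h2]; exact hβ) h3, if_pos]
      · right
        refine ⟨_, ⟨m, le_rfl, rfl⟩, ?_⟩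
        rw [← Equiv.Perm.mul_apply, ← pow_succ', h2]
      · rw [hm2] at he
        by_contra hno
        rw [Nat.not_odd_iff_even] at hno
        obtain ⟨a, ha⟩ := he
        obtain ⟨b, hb⟩ := hno
        omega

lemma subset_tilde (σ : Equiv.Perm B) (T : Set B) : T ⊆ tilde σ T := Set.subset_union_left

lemma eps_eq {σ : Equiv.Perm B} {T : Set B} {β : B} (h : ¬ orbit σ β ⊆ T) :
    epsT σ T β = (-1 : ℚ) ^ (mu σ T β - 1) := by
  rw [epsT, if_neg h]
  split_ifs with h1
  · rfl
  · have h2 := (mem_tilde_iff (fun h' => h1 (subset_tilde σ T h'))).not.1 h1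
    rw [Nat.not_even_iff_odd] at h2
    obtain ⟨k, hk⟩ := h2
    rw [hk, Nat.add_sub_cancel, pow_mul]; simp

lemma eps_of_not_tilde {σ : Equiv.Perm B} {T : Set B} {β : B} (h : β ∉ tilde σ T) :
    epsT σ T β = 1 := by
  rw [epsT, if_neg h, if_neg (fun h' => h (subset_tilde σ T (h' (self_mem σ β))))]

lemma eps_of_tilde {σ : Equiv.Perm B} {T : Set B} {β : B} (h : β ∈ tilde σ T) (h' : β ∉ T) :
    epsT σ T β = -1 := by
  have hO : ¬ orbit σ β ⊆ T := fun h => h' (h (self_mem σ β))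
  obtain ⟨k, hk⟩ := (mem_tilde_iff h').1 h
  have := (mu_spec hO).1
  rw [eps_eq hO, hk]
  apply Odd.neg_one_pow
  exact ⟨k - 1, by omega⟩

lemma eps_succ {σ : Equiv.Perm B} {T : Set B} {z : B} (hO : ¬ orbit σ z ⊆ T) (hz : σ z ∈ T) :
    epsT σ T (σ z) = - epsT σ T z := by
  have hs : sameOrbit σ z (σ z) := ⟨1, by simp⟩
  have hO' : ¬ orbit σ (σ z) ⊆ T := fun h => hO (orbit_subset_of (sameOrbit_symm hs) h)
  have h1 := mu_spec hO'
  have key : ∀ i, (σ ^ (i + 1)) z = (σ ^ i) (σ z) := fun i => by rw [pow_succ]; rfl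
  have : mu σ T z = mu σ T (σ z) + 1 := by
    apply mu_eq (by omega)
    · rw [key]; exact h1.2
    · intro i hi hi'
      obtain ⟨j, rfl⟩ : ∃ j, i = j + 1 := ⟨i - 1, by omega⟩
      rw [key]
      rcases Nat.eq_zero_or_pos j with rfl | hj
      · simpa using hz
      · exact mem_of_lt_mu hj (by omega)
  rw [eps_eq hO, eps_eq hO', this]
  obtain ⟨k, hk⟩ : ∃ k, mu σ T (σ z) = k + 1 := ⟨mu σ T (σ z) - 1, by omega⟩
  rw [hk]
  simp [pow_succ]

lemma Lfun_add (σ : Equiv.Perm B) (p : ℕ) (ε : B → ℚ) (x y : B) (κ κ' : B → ℚ) :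
    Lfun σ p ε x y (κ + κ') = Lfun σ p ε x y κ + Lfun σ p ε x y κ' := by
  simp only [Lfun, Pi.add_apply, mul_add, Finset.sum_add_distrib]

lemma Lfun_neg (σ : Equiv.Perm B) (p : ℕ) (ε : B → ℚ) (x y : B) (κ : B → ℚ) :
    Lfun σ p ε x y (-κ) = - Lfun σ p ε x y κ := by
  simp only [Lfun, Pi.neg_apply, mul_neg, Finset.sum_neg_distrib]

lemma Lfun_smul (σ : Equiv.Perm B) (p : ℕ) (ε : B → ℚ) (x y : B) (c : ℚ) (κ : B → ℚ) :
    Lfun σ p ε x y (c • κ) = c * Lfun σ p ε x y κ := by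
  simp only [Lfun, Pi.smul_apply, smul_eq_mul, Finset.mul_sum]
  exact Finset.sum_congr rfl fun i _ => by ring

lemma Lfun_e_zero (σ : Equiv.Perm B) (p : ℕ) (ε : B → ℚ) (x y τ : B)
    (h : ∀ i ≤ steps0 σ x y, (σ ^ i) x ≠ τ) : Lfun σ p ε x y (e τ) = 0 := by
  apply Finset.sum_eq_zero
  intro i hi
  rw [Finset.mem_range] at hi
  simp [e, h i (by omega)]

lemma Lfun_e (σ : Equiv.Perm B) (p : ℕ) (ε : B → ℚ) (x y : B) (hxy : sameOrbit σ x y) (j : ℕ)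
    (hj : j ≤ steps0 σ x y) :
    Lfun σ p ε x y (e ((σ ^ j) x)) = ε ((σ ^ j) x) * (p : ℚ) ^ j := by
  have hN : (σ ^ steps0 σ x y) x = y := Nat.sInf_mem (s := {n : ℕ | (σ ^ n) x = y}) hxy
  have hle : ∀ n, (σ ^ n) x = y → steps0 σ x y ≤ n := fun n hn => Nat.sInf_le hn
  have key : ∀ i j, i < j → j ≤ steps0 σ x y → (σ ^ i) x ≠ (σ ^ j) x := by
    intro i j hij hj he
    have h1 : (σ ^ (steps0 σ x y - j + i)) x = y := by
      rw [← pow_ap, he, pow_ap, Nat.sub_add_cancel hj, hN]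
    have := hle _ h1
    omega
  rw [Lfun, Finset.sum_eq_single j]
  · simp [e]
  · intro i hi hne
    rw [Finset.mem_range] at hi
    have : (σ ^ i) x ≠ (σ ^ j) x := by
      rcases lt_or_gt_of_ne hne with h | h
      · exact key i j h hj
      · exact (key j i h (by omega)).symm
    simp [e, this]
  · intro h
    rw [Finset.mem_range] at h
    omega

lemma inv_pow_succ (σ : Equiv.Perm B) (i : ℕ) (x : B) :
    σ⁻¹ ((σ ^ (i + 1)) x) = (σ ^ i) x := by
  rw [pow_succ', Equiv.Perm.mul_apply, inv_ap_self]

/-- Case `β ∈ T̃ - T`. -/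
lemma case_tilde (σ : Equiv.Perm B) (p : ℕ) (hp : p.Prime) (T : Set B) (β : B) (hβ : β ∉ T)
    (ht : β ∈ tilde σ T) :
    0 < LT σ p T β (gvec σ p T β) ∧
    ∀ τ : B, τ ≠ β → LT σ p T β (gvec σ p T τ) = 0 := by
  have hp0 : (0 : ℚ) < p := by exact_mod_cast hp.pos
  have hO : ¬ orbit σ β ⊆ T := fun h => hβ (h (self_mem σ β))
  have hm := mu_spec hO
  obtain ⟨m, hm1⟩ : ∃ m, mu σ T β = m + 1 := ⟨mu σ T β - 1, by omega⟩
  have hN : steps0 σ β ((σ ^ m) β) = m := by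
    have h0 : steps0 σ β ((σ ^ m) β) ≤ m := Nat.sInf_le (s := {n : ℕ | (σ ^ n) β = (σ ^ m) β}) rfl
    apply le_antisymm h0
    by_contra hlt
    push Not at hlt
    have h1 : (σ ^ steps0 σ β ((σ ^ m) β)) β = (σ ^ m) β :=
      Nat.sInf_mem (s := {n : ℕ | (σ ^ n) β = (σ ^ m) β}) ⟨m, rfl⟩
    apply hm.2
    rw [hm1, pow_succ', Equiv.Perm.mul_apply, ← h1, ← Equiv.Perm.mul_apply, ← pow_succ']
    exact mem_of_lt_mu (by omega) (by omega)
  have hLe : ∀ j ≤ m, Lfun σ p (epsT σ T) β ((σ ^ m) β) (e ((σ ^ j) β))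
      = epsT σ T ((σ ^ j) β) * (p : ℚ) ^ j := fun j hj =>
    Lfun_e σ p _ _ _ ⟨m, rfl⟩ j (by omega)
  have hL0 : ∀ τ, (∀ i ≤ m, (σ ^ i) β ≠ τ) →
      Lfun σ p (epsT σ T) β ((σ ^ m) β) (e τ) = 0 := fun τ h =>
    Lfun_e_zero σ p _ _ _ τ (by rw [hN]; exact h)
  have hmT : ∀ i ≤ m, 0 < i → (σ ^ i) β ∈ T := fun i hi h0 => mem_of_lt_mu h0 (by omega)
  have hmt : ∀ i ≤ m, (σ ^ i) β ∈ tilde σ T := by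
    intro i hi
    rcases Nat.eq_zero_or_pos i with rfl | h0
    · simpa using ht
    · exact subset_tilde σ T (hmT i hi h0)
  have hLβ : Lfun σ p (epsT σ T) β ((σ ^ m) β) (e β) = -1 := by
    have := hLe 0 (by omega)
    simpa [eps_of_tilde ht hβ] using this
  have hL1 : ∀ τ, τ ∉ T → τ ≠ β → Lfun σ p (epsT σ T) β ((σ ^ m) β) (e τ) = 0 := by
    intro τ hτ hne
    apply hL0
    rintro i hi rfl
    rcases Nat.eq_zero_or_pos i with rfl | h0
    · simp at hne
    · exact hτ (hmT i hi h0)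
  have hL2 : ∀ τ, τ ∉ tilde σ T → Lfun σ p (epsT σ T) β ((σ ^ m) β) (e τ) = 0 := by
    intro τ hτ
    apply hL0
    rintro i hi rfl
    exact hτ (hmt i hi)
  have hLT : ∀ κ, LT σ p T β κ = Lfun σ p (epsT σ T) β ((σ ^ m) β) κ := by
    intro κ
    rw [LT, if_pos ht, hm1, Nat.add_sub_cancel]
  simp only [hLT]
  constructor
  · rw [gvec, if_neg hβ]
    split_ifs with h1
    · rw [Lfun_neg, hLβ]; norm_num
    · rw [fB, Lfun_neg, Lfun_add, Lfun_smul, hLβ, hL2 _ (nn_spec h1).2]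
      have : (0 : ℚ) < (p : ℚ) ^ nn σ T β := by positivity
      linarith
  · intro τ hne
    rw [gvec]
    split_ifs with h0 h1 h2
    · rw [bsimple, Lfun_add, Lfun_smul]
      by_cases hex : ∃ i ≤ m, (σ ^ i) β = τ
      · obtain ⟨i, hi, rfl⟩ := hex
        rcases Nat.eq_zero_or_pos i with rfl | hpos
        · simp at hne
        obtain ⟨j, rfl⟩ : ∃ j, i = j + 1 := ⟨i - 1, by omega⟩
        rw [inv_pow_succ, hLe _ hi, hLe j (by omega)]
        have hs : (σ ^ (j + 1)) β = σ ((σ ^ j) β) := by rw [pow_succ']; rfl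
        rw [hs] at h0 ⊢
        rw [eps_succ (fun h => hO (orbit_subset_of (sameOrbit_symm (sameOrbit_pow σ j β)) h)) h0]
        ring
      · push Not at hex
        rw [hL0 τ hex, hL0]
        · ring
        · intro i hi he
          have hs : τ = (σ ^ (i + 1)) β := by
            rw [pow_succ', Equiv.Perm.mul_apply, he, ap_inv]
          rcases Nat.lt_or_ge i m with hlt | hge
          · exact hex (i + 1) hlt hs.symm
          · have : i = m := by omega
            subst this
            rw [hm1, ← hs] at hm
            exact hm.2 h0
    · rw [Lfun_neg, hL1 τ h0 hne, neg_zero]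
    · rw [fB, Lfun_neg, Lfun_add, Lfun_smul, hL1 τ h0 hne, hL2 _ (nn_spec h1).2]; ring
    · rw [fH, Lfun_add, Lfun_smul, Lfun_neg, hL1 τ h0 hne, hL2 _ (nn_spec h1).2]; ring

/-- Case `β ∉ T̃`. -/
lemma case_not_tilde (σ : Equiv.Perm B) (p : ℕ) (hp : p.Prime) (T : Set B) (β : B) (hβ : β ∉ T)
    (ht : β ∉ tilde σ T) :
    0 < LT σ p T β (gvec σ p T β) ∧
    ∀ τ : B, τ ≠ β → LT σ p T β (gvec σ p T τ) = 0 := by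
  have hp1 : (1 : ℚ) < p := by exact_mod_cast hp.one_lt
  have hp0 : (0 : ℚ) < p := by linarith
  have hO : ¬ orbit σ β ⊆ T := fun h => hβ (h (self_mem σ β))
  have hOt : ¬ orbit σ β ⊆ tilde σ T := fun h => ht (h (self_mem σ β))
  have hm := mu_spec hO
  have hLT : ∀ κ, LT σ p T β κ = Lfun σ p (epsT σ T) ((σ ^ mu σ T β) β)
      (σ⁻¹ ((σ ^ mu σ T β) β)) κ := by
    intro κ
    rw [LT, if_neg ht, Lfun1]
  simp only [hLT]
  obtain ⟨x, hx⟩ : ∃ x, (σ ^ mu σ T β) β = x := ⟨_, rfl⟩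
  rw [hx]
  rw [hx] at hm
  have hβx : sameOrbit σ β x := ⟨_, hx⟩
  have hxy : sameOrbit σ x (σ⁻¹ x) := sameOrbit_symm ⟨1, by simp⟩
  obtain ⟨N, hN⟩ : ∃ N, steps0 σ x (σ⁻¹ x) = N := ⟨_, rfl⟩
  have hcyc : (σ ^ (N + 1)) x = x := by
    have h1 : (σ ^ N) x = σ⁻¹ x := by
      rw [← hN]
      exact Nat.sInf_mem (s := {n : ℕ | (σ ^ n) x = σ⁻¹ x}) hxy
    rw [pow_succ', Equiv.Perm.mul_apply, h1, ap_inv]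
  have hcycβ : (σ ^ (N + 1)) β = β := by
    apply (σ ^ mu σ T β).injective
    rw [pow_ap, add_comm, ← pow_ap, hx, hcyc]
  have hpos : ∀ τ, sameOrbit σ x τ → ∃ i ≤ N, (σ ^ i) x = τ := by
    rintro τ ⟨n, rfl⟩
    induction n with
    | zero => exact ⟨0, by omega, rfl⟩
    | succ n ih =>
      obtain ⟨i, hi, he⟩ := ih
      rw [pow_succ', Equiv.Perm.mul_apply, ← he, ← Equiv.Perm.mul_apply, ← pow_succ']
      rcases Nat.lt_or_ge i N with h | h
      · exact ⟨i + 1, h, rfl⟩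
      · have : i = N := by omega
        subst this
        exact ⟨0, by omega, by rw [hcyc]; rfl⟩
  have hmu : mu σ T β ≤ N + 1 := mu_le (by omega) (by rw [hcycβ]; exact hβ)
  obtain ⟨k, hk⟩ : ∃ k, k + mu σ T β = N + 1 := ⟨N + 1 - mu σ T β, by omega⟩
  have hkβ : (σ ^ k) x = β := by rw [← hx, pow_ap, hk, hcycβ]
  have hLe : ∀ j ≤ N, Lfun σ p (epsT σ T) x (σ⁻¹ x) (e ((σ ^ j) x))
      = epsT σ T ((σ ^ j) x) * (p : ℚ) ^ j := fun j hj =>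
    Lfun_e σ p _ _ _ hxy j (by omega)
  have hL0 : ∀ τ, ¬ sameOrbit σ x τ → Lfun σ p (epsT σ T) x (σ⁻¹ x) (e τ) = 0 := fun τ h =>
    Lfun_e_zero σ p _ _ _ τ (fun i _ he => h ⟨i, he⟩)
  constructor
  · rw [gvec, if_neg hβ, if_neg hOt, if_neg ht, fH, Lfun_add, Lfun_smul, Lfun_neg]
    have hn := nn_spec hOt
    have hnle : nn σ T β ≤ N + 1 := nn_le (by omega) (by rw [hcycβ]; exact ht)
    have hmn : mu σ T β ≤ nn σ T β := mu_le hn.1 (fun h => hn.2 (subset_tilde σ T h))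
    obtain ⟨d, hd⟩ := Nat.exists_eq_add_of_le hmn
    have hs : (σ ^ nn σ T β) β = (σ ^ d) x := by rw [← hx, pow_ap, hd, add_comm]
    have h1 := hLe d (by omega)
    rw [← hs, eps_of_not_tilde hn.2] at h1
    have h2 := hLe k (by omega)
    rw [hkβ, eps_of_not_tilde ht] at h2
    rw [h1, h2]
    have : (p : ℚ) ^ d < (p : ℚ) ^ (nn σ T β + k) := pow_lt_pow_right₀ hp1 (by omega)
    rw [pow_add] at this
    linarith
  · intro τ hne
    by_cases hτ : sameOrbit σ x τ
    · obtain ⟨i, hi, hiτ⟩ := hpos τ hτ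
      have hβτ : sameOrbit σ β τ := sameOrbit_trans hβx hτ
      have hOτ : ¬ orbit σ τ ⊆ tilde σ T := fun h => hOt (orbit_subset_of (sameOrbit_symm hβτ) h)
      have hLτ := hLe i hi
      rw [hiτ] at hLτ
      have hLn : τ ∉ T → Lfun σ p (epsT σ T) x (σ⁻¹ x) (e ((σ ^ nn σ T τ) τ))
          = (p : ℚ) ^ (nn σ T τ + i) := by
        intro h0
        have hik : i < k := by
          by_contra hge
          push Not at hge
          rcases Nat.eq_or_lt_of_le hge with h | h
          · subst h; exact hne (hiτ.symm.trans hkβ)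
          · apply h0
            have : τ = (σ ^ (i - k)) β := by
              rw [← hkβ, pow_ap, Nat.sub_add_cancel hge, hiτ]
            rw [this]
            exact mem_of_lt_mu (by omega) (by omega)
        have hle : nn σ T τ ≤ k - i := nn_le (by omega) (by
          rw [← hiτ, pow_ap, Nat.sub_add_cancel hik.le, hkβ]; exact ht)
        have h1 := hLe (nn σ T τ + i) (by omega)
        rw [← pow_ap, hiτ, eps_of_not_tilde (nn_spec hOτ).2, one_mul] at h1
        exact h1
      rw [gvec]
      split_ifs with h0 h2
      · rw [bsimple, Lfun_add, Lfun_smul]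
        rcases Nat.eq_zero_or_pos i with rfl | hpos
        · exfalso
          apply hm.2
          have : x = τ := hiτ
          rw [this]; exact h0
        obtain ⟨j, rfl⟩ : ∃ j, i = j + 1 := ⟨i - 1, by omega⟩
        have hj := hLe j (by omega)
        have hs : τ = σ ((σ ^ j) x) := by rw [← hiτ, pow_succ']; rfl
        rw [hLτ, ← hiτ, inv_pow_succ, hj, hiτ, hs]
        rw [hs] at h0
        rw [eps_succ (fun h => hO (orbit_subset_of
          (sameOrbit_symm (sameOrbit_trans hβx (sameOrbit_pow σ j x))) h)) h0]
        ring
      · rw [fB, Lfun_neg, Lfun_add, Lfun_smul, hLτ, hLn h0, eps_of_tilde h2 h0]; ring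
      · rw [fH, Lfun_add, Lfun_smul, Lfun_neg, hLτ, hLn h0, eps_of_not_tilde h2]; ring
    · have hn : ¬ sameOrbit σ x ((σ ^ nn σ T τ) τ) := fun h =>
        hτ (sameOrbit_trans h (sameOrbit_symm ⟨_, rfl⟩))
      have hi : ¬ sameOrbit σ x (σ⁻¹ τ) := fun h =>
        hτ (sameOrbit_trans h ⟨1, by simp⟩)
      rw [gvec]
      split_ifs
      · rw [bsimple, Lfun_add, Lfun_smul, hL0 _ hτ, hL0 _ hi]; ring
      · rw [Lfun_neg, hL0 _ hτ]; ring
      · rw [fB, Lfun_neg, Lfun_add, Lfun_smul, hL0 _ hτ, hL0 _ hn]; ring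
      · rw [fH, Lfun_add, Lfun_smul, Lfun_neg, hL0 _ hτ, hL0 _ hn]; ring

end GO

/-- For every `T ⊆ 𝔹` and `β ∈ 𝔹 − T`: `L_{T,β}(g_β) > 0`, and
`L_{T,β}(g_τ) = 0` for every `τ ≠ β`. -/
theorem statement4 {B : Type*} [Fintype B] [DecidableEq B] [Nonempty B]
    (σ : Equiv.Perm B) (p : ℕ) (hp : p.Prime) (T : Set B) (β : B) (hβ : β ∉ T) :
    0 < GO.LT σ p T β (GO.gvec σ p T β) ∧
    ∀ τ : B, τ ≠ β → GO.LT σ p T β (GO.gvec σ p T τ) = 0 := by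
  by_cases ht : β ∈ GO.tilde σ T
  · exact GO.case_tilde σ p hp T β hβ ht
  · exact GO.case_not_tilde σ p hp T β hβ ht
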